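/- arXiv:2602.19933 — 7 statements merged into one kernel-verified Lean document; each statement's English description precedes it below -/
import Mathlib

section
/- Let a signed digraph on N nodes with M edges contain a directed spanning tree. If the digraph contains a root node, then the rank of the signed in-incidence matrix E_{s⊙} equals N − 1; if the digraph contains no root node, then the rank of E_{s⊙} equals N. -/
open Matrix

/-- The signed incidence matrix of a signed digraph. -/
def Es {N M : ℕ} (head tail : Fin M → Fin N) (σ : Fin M → ℝ) : Matrix (Fin N) (Fin M) ℝ :=
  Matrix.of fun i k => if i = head k then 1 else if i = tail k then -σ k else 0

/-- The signed in-incidence matrix of a signed digraph. -/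
def Ein {N M : ℕ} (head tail : Fin M → Fin N) (σ : Fin M → ℝ) : Matrix (Fin N) (Fin M) ℝ :=
  Matrix.of fun i k => if i = tail k then -σ k else 0

/-- Node `b` is reachable from node `a`. -/
def Reaches {N M : ℕ} (head tail : Fin M → Fin N) : Fin N → Fin N → Prop :=
  Relation.ReflTransGen fun a b => ∃ k, head k = a ∧ tail k = b

/-- The digraph contains a directed spanning tree. -/
def HasSpanningTree {N M : ℕ} (head tail : Fin M → Fin N) : Prop :=
  ∃ r, ∀ b, Reaches head tail r b

/-- A root node: a node that is the tail of no edge. -/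
def IsRootNode {N M : ℕ} (tail : Fin M → Fin N) (i : Fin N) : Prop :=
  ∀ k, tail k ≠ i

/-!
Column `k` of the in-incidence matrix is a nonzero multiple of the basis vector at `tail k`, so the
rank counts the nodes that have an incoming edge. A node without incoming edges is reachable only
from itself, hence it is the node `r` from which the whole digraph is reachable: at most one node is
missing from the count.
-/

theorem rank_submatrix_id_eq_ncard_range {m n o R : Type*} [Fintype o] [CommSemiring R]
    [Nontrivial R] {A : Matrix m n R} (hA : LinearIndependent R A.col)
    (f : o → n) : (A.submatrix id f).rank = (Set.range f).ncard := by
  classical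
  have range_col : Set.range (A.submatrix id f).col =
      Set.range (A.col ∘ ((↑) : Set.range f → n)) := by
    rw [Set.range_comp, Subtype.range_coe, ← Set.range_comp]
    rfl
  rw [rank_eq_finrank_span_cols, range_col,
    finrank_span_eq_card (hA.comp _ Subtype.val_injective), ← Nat.card_eq_fintype_card,
    Nat.card_coe_set_eq]

theorem linearIndependent_col_one {n R : Type*} [DecidableEq n] [Semiring R] :
    LinearIndependent R (1 : Matrix n n R).col := by
  convert Pi.linearIndependent_single_one n R using 1
  ext j i
  simp only [col_apply, one_apply, Pi.single_apply]

/-- The in-incidence matrix of a digraph whose edge `k` ends at `tail k` and contributes the entry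
`w k` there. The nodes, the edges and the entries may come from arbitrary types, and loops and
parallel edges are allowed; `Ein` is the case of entries `-σ k`. -/
def weightedInIncidence {V E R : Type*} [DecidableEq V] [Zero R] (tail : E → V) (w : E → R) :
    Matrix V E R :=
  Matrix.of fun i k => if i = tail k then w k else 0

section InIncidence

variable {V E R : Type*} [DecidableEq V] [Fintype E]

theorem weightedInIncidence_eq_submatrix_mul_diagonal [DecidableEq E] [NonAssocSemiring R]
    (tail : E → V) (w : E → R) :
    weightedInIncidence tail w = (1 : Matrix V V R).submatrix id tail * diagonal w := by
  ext i k
  simp [weightedInIncidence, one_apply]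

theorem rank_weightedInIncidence [CommRing R] [Nontrivial R] (tail : E → V) {w : E → R}
    (hw : ∀ k, w k ∈ nonZeroDivisors R) :
    (weightedInIncidence tail w).rank = (Set.range tail).ncard := by
  classical
  have det_mem : (diagonal w).det ∈ nonZeroDivisors R := by
    rw [det_diagonal]
    exact prod_mem fun k _ => hw k
  rw [weightedInIncidence_eq_submatrix_mul_diagonal,
    rank_mul_eq_left_of_det_mem_nonZeroDivisors _ _ det_mem,
    rank_submatrix_id_eq_ncard_range linearIndependent_col_one]

end InIncidence

theorem eq_of_reflTransGen_of_forall_not {α : Type*} {rel : α → α → Prop} {a b : α}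
    (hab : Relation.ReflTransGen rel a b) (hb : ∀ c, ¬ rel c b) : b = a :=
  hab.cases_tail.resolve_right fun ⟨c, _, hcb⟩ => hb c hcb

theorem range_tail_eq_compl_singleton {V E : Type*} {head tail : E → V} {r i : V}
    (hr : ∀ b, Relation.ReflTransGen (fun a b => ∃ k, head k = a ∧ tail k = b) r b)
    (hi : ∀ k, tail k ≠ i) : Set.range tail = {i}ᶜ := by
  have eq_r {j : V} (hj : ∀ k, tail k ≠ j) : j = r :=
    eq_of_reflTransGen_of_forall_not (hr j) fun _ ⟨k, _, hk⟩ => hj k hk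
  refine Set.Subset.antisymm (Set.range_subset_iff.2 hi) fun j hji => ?_
  by_contra hj
  exact hji ((eq_r fun k hk => hj ⟨k, hk⟩).trans (eq_r hi).symm)

theorem rank_in_incidence_spanning_tree_general {V E R : Type*} [DecidableEq V] [Fintype E]
    [CommRing R] [Nontrivial R] (head tail : E → V) (w : E → R)
    (hw : ∀ k, w k ∈ nonZeroDivisors R)
    (htree : ∃ r, ∀ b, Relation.ReflTransGen (fun a b => ∃ k, head k = a ∧ tail k = b) r b) :
    ((∃ i, ∀ k, tail k ≠ i) → (weightedInIncidence tail w).rank = Nat.card V - 1) ∧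
    ((¬ ∃ i, ∀ k, tail k ≠ i) → (weightedInIncidence tail w).rank = Nat.card V) := by
  rw [rank_weightedInIncidence tail hw]
  constructor
  · rintro ⟨i, hi⟩
    obtain ⟨r, hr⟩ := htree
    rw [range_tail_eq_compl_singleton hr hi, Set.compl_eq_univ_sdiff,
      Set.ncard_sdiff_singleton_of_mem (Set.mem_univ i), Set.ncard_univ]
  · intro no_root
    have tail_surjective : Function.Surjective tail := by
      simpa only [Function.Surjective, not_exists, not_forall, not_not] using no_root
    rw [tail_surjective.range_eq, Set.ncard_univ]

theorem rank_in_incidence_spanning_tree {N M : ℕ}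
    (head tail : Fin M → Fin N) (σ : Fin M → ℝ)
    (hht : ∀ k, head k ≠ tail k)
    (hinj : ∀ k k', head k = head k' → tail k = tail k' → k = k')
    (hσ : ∀ k, σ k = 1 ∨ σ k = -1)
    (hdss : ∀ k k', head k = tail k' → tail k = head k' → σ k = σ k')
    (htree : HasSpanningTree head tail) :
    ((∃ i, IsRootNode tail i) → (Ein head tail σ).rank = N - 1) ∧
    ((¬ ∃ i, IsRootNode tail i) → (Ein head tail σ).rank = N) := by
  have neg_sign_mem (k : Fin M) : -σ k ∈ nonZeroDivisors ℝ :=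
    mem_nonZeroDivisors_of_ne_zero (by rcases hσ k with h | h <;> simp [h])
  simpa only [Nat.card_fin] using!
    rank_in_incidence_spanning_tree_general head tail (fun k => -σ k) neg_sign_mem htree
end

section
/- If a signed digraph is structurally balanced, then there exists a diagonal matrix D = diag(d) with d : Fin N → {1, −1} such that every off-diagonal entry of D L_s D is nonpositive. -/
open Matrix

/-- The signed Laplacian `L_s = E_{s⊙} E_sᵀ`. -/
def Ls {N M : ℕ} (head tail : Fin M → Fin N) (σ : Fin M → ℝ) : Matrix (Fin N) (Fin N) ℝ :=
  Ein head tail σ * (Es head tail σ)ᵀ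

/-- The signed edge Laplacian `L_{e_s} = E_sᵀ E_{s⊙}`. -/
def Les {N M : ℕ} (head tail : Fin M → Fin N) (σ : Fin M → ℝ) : Matrix (Fin M) (Fin M) ℝ :=
  (Es head tail σ)ᵀ * Ein head tail σ

/-- Structural balance of a signed digraph. -/
def StructBalanced {N M : ℕ} (head tail : Fin M → Fin N) (σ : Fin M → ℝ) : Prop :=
  ∃ d : Fin N → ℝ, (∀ i, d i = 1 ∨ d i = -1) ∧ ∀ k, d (head k) * d (tail k) = σ k

section

variable {N M : ℕ} {head tail : Fin M → Fin N} {σ : Fin M → ℝ} {i j : Fin N}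

theorem Ein_mul_Es_apply_of_ne (hij : i ≠ j) (k : Fin M) :
    Ein head tail σ i k * Es head tail σ j k =
      if head k = j ∧ tail k = i then -σ k else 0 := by
  simp only [Ein, Es, of_apply]
  grind

theorem Ls_apply_of_ne (hij : i ≠ j) :
    Ls head tail σ i j = -∑ k with head k = j ∧ tail k = i, σ k := by
  simp only [Ls, mul_apply, transpose_apply, Ein_mul_Es_apply_of_ne hij, ← Finset.sum_filter,
    Finset.sum_neg_distrib]

theorem diagonal_mul_Ls_mul_diagonal_apply_of_ne (d : Fin N → ℝ) (hij : i ≠ j) :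
    (diagonal d * Ls head tail σ * diagonal d) i j =
      -∑ k with head k = j ∧ tail k = i, d (head k) * d (tail k) * σ k := by
  rw [mul_diagonal, diagonal_mul, Ls_apply_of_ne hij, mul_neg, neg_mul, Finset.mul_sum,
    Finset.sum_mul]
  congr 1
  refine Finset.sum_congr rfl fun k hk => ?_
  obtain ⟨rfl, rfl⟩ := (Finset.mem_filter.mp hk).2
  ring

theorem gauge_transformation_general {d : Fin N → ℝ}
    (hd : ∀ k, 0 ≤ d (head k) * d (tail k) * σ k) (hij : i ≠ j) :
    (diagonal d * Ls head tail σ * diagonal d) i j ≤ 0 := by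
  rw [diagonal_mul_Ls_mul_diagonal_apply_of_ne d hij]
  exact neg_nonpos.mpr (Finset.sum_nonneg fun k _ => hd k)

end

theorem gauge_transformation {N M : ℕ}
    (head tail : Fin M → Fin N) (σ : Fin M → ℝ)
    (hht : ∀ k, head k ≠ tail k)
    (hinj : ∀ k k', head k = head k' → tail k = tail k' → k = k')
    (hσ : ∀ k, σ k = 1 ∨ σ k = -1)
    (hdss : ∀ k k', head k = tail k' → tail k = head k' → σ k = σ k')
    (hSB : StructBalanced head tail σ) :
    ∃ d : Fin N → ℝ, (∀ i, d i = 1 ∨ d i = -1) ∧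
      ∀ i j, i ≠ j →
        (Matrix.diagonal d * Ls head tail σ * Matrix.diagonal d) i j ≤ 0 := by
  obtain ⟨d, hd, hdσ⟩ := hSB
  exact ⟨d, hd, fun i j hij =>
    gauge_transformation_general (fun k => hdσ k ▸ mul_self_nonneg (d (head k) * d (tail k))) hij⟩
end

section
/- For a structurally balanced signed digraph containing a directed spanning tree, 0 is a simple eigenvalue of the signed Laplacian L_s (i.e., 0 is a root of the characteristic polynomial of L_s of multiplicity exactly 1), and every nonzero complex eigenvalue of L_s has positive real part. -/
open Matrix

/-!
Structural balance is a change of signs: with `D = diag(d)`, the signed Laplacian is `D L D`, where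
`L` is the Laplacian of the underlying unsigned digraph, so the two have the same characteristic
polynomial. By the maximum principle a vector in the kernel of `L` is constant, since its maximum
and its minimum both propagate backwards along edges to the root of the spanning tree. The constant
vector `1` is not in the range of `L`, since `L x` is nonpositive at a minimum of `x`. Hence the
kernel is a line meeting the range trivially, and `0` is a simple eigenvalue. Each Gershgorin disc
of `L` is centred at some real `R` and has radius `R`, so it touches the imaginary axis only at `0`.
-/

theorem rootMultiplicity_zero_charpoly_eq_finrank_ker {K E : Type*} [Field K] [AddCommGroup E]
    [Module K E] [FiniteDimensional K E] (φ : Module.End K E)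
    (hφ : Disjoint (LinearMap.range φ) (LinearMap.ker φ)) :
    φ.charpoly.rootMultiplicity 0 = Module.finrank K (LinearMap.ker φ) := by
  have ker_eq_ker_sq : LinearMap.ker (φ ^ 1) = LinearMap.ker (φ ^ 2) := by
    ext x
    rw [pow_one, pow_two, LinearMap.mem_ker, LinearMap.mem_ker, Module.End.mul_apply]
    refine ⟨fun hx => by rw [hx, map_zero], fun hx => ?_⟩
    exact Submodule.disjoint_def.mp hφ (φ x) (LinearMap.mem_range_self φ x) hx
  have maxGenEigenspace_eq : φ.maxGenEigenspace 0 = LinearMap.ker φ := by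
    refine le_antisymm (fun x hx => ?_) ?_
    · obtain ⟨n, hn⟩ := (φ.mem_maxGenEigenspace 0 x).mp hx
      rw [zero_smul, sub_zero] at hn
      rw [← pow_one φ, Module.End.ker_pow_constant ker_eq_ker_sq n, LinearMap.mem_ker, pow_add,
        Module.End.mul_apply, hn, map_zero]
    · rw [← Module.End.eigenspace_zero]
      exact Module.End.eigenspace_le_maxGenEigenspace
  rw [← LinearMap.finrank_maxGenEigenspace_eq, maxGenEigenspace_eq]

theorem re_pos_of_mem_closedBall_ofReal_self {z : ℂ} {R : ℝ}
    (hz : z ∈ Metric.closedBall (R : ℂ) R) (hz0 : z ≠ 0) : 0 < z.re := by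
  have hR : 0 ≤ R := Metric.nonneg_of_mem_closedBall hz
  have normSq_sub_le : Complex.normSq (z - R) ≤ R ^ 2 := by
    rw [Complex.normSq_eq_norm_sq]
    exact pow_le_pow_left₀ (norm_nonneg _) (mem_closedBall_iff_norm.mp hz) 2
  have normSq_pos : 0 < Complex.normSq z := Complex.normSq_pos.mpr hz0
  simp only [Complex.normSq_apply, Complex.sub_re, Complex.sub_im, Complex.ofReal_re,
    Complex.ofReal_im] at normSq_sub_le normSq_pos
  have two_mul_pos : 0 < 2 * R * z.re := by linarith
  exact pos_of_mul_pos_right two_mul_pos (by positivity)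

theorem charpoly_conj_of_mul_self_eq_one {V R : Type*} [Fintype V] [DecidableEq V] [CommRing R]
    {D : Matrix V V R} (hD : D * D = 1) (A : Matrix V V R) :
    (D * A * D).charpoly = A.charpoly := by
  rw [charpoly_mul_comm, ← mul_assoc, hD, one_mul]

/-- The Laplacian of a weighted digraph, where `w i j` is the weight of the edges from `j` into `i`.
Each row sums to zero, and loops (the diagonal of `w`) cancel. -/
def weightedLaplacian {V R : Type*} [Fintype V] [DecidableEq V] [Ring R] (w : Matrix V V R) :
    Matrix V V R :=
  diagonal (fun i => ∑ j, w i j) - w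

namespace weightedLaplacian

variable {V : Type*} [Fintype V] [DecidableEq V]

theorem mulVec_apply {R : Type*} [Ring R] (w : Matrix V V R) (x : V → R) (i : V) :
    (weightedLaplacian w *ᵥ x) i = ∑ j, w i j * (x i - x j) := by
  rw [weightedLaplacian, sub_mulVec, Pi.sub_apply, mulVec_diagonal, Finset.sum_mul, mulVec,
    dotProduct, ← Finset.sum_sub_distrib]
  exact Finset.sum_congr rfl fun j _ => (mul_sub _ _ _).symm

theorem mulVec_one {R : Type*} [Ring R] (w : Matrix V V R) : weightedLaplacian w *ᵥ 1 = 0 := by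
  ext i
  simp [mulVec_apply]

section MaximumPrinciple

variable {R : Type*} [Ring R] [LinearOrder R] [IsStrictOrderedRing R] {w : Matrix V V R}
  {x : V → R} {i j r : V}

theorem mulVec_nonneg_of_forall_le (hw : ∀ i j, 0 ≤ w i j) (hmax : ∀ j, x j ≤ x i) :
    0 ≤ (weightedLaplacian w *ᵥ x) i := by
  rw [mulVec_apply]
  exact Finset.sum_nonneg fun j _ => mul_nonneg (hw i j) (sub_nonneg.mpr (hmax j))

theorem eq_of_forall_le_of_mulVec_nonpos (hw : ∀ i j, 0 ≤ w i j) (hmax : ∀ j, x j ≤ x i)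
    (hx : (weightedLaplacian w *ᵥ x) i ≤ 0) (hij : 0 < w i j) : x j = x i := by
  have terms_nonneg : ∀ j ∈ Finset.univ, 0 ≤ w i j * (x i - x j) :=
    fun j _ => mul_nonneg (hw i j) (sub_nonneg.mpr (hmax j))
  have sum_eq_zero := hx.antisymm (mulVec_nonneg_of_forall_le hw hmax)
  rw [mulVec_apply, Finset.sum_eq_zero_iff_of_nonneg terms_nonneg] at sum_eq_zero
  have term_eq_zero := sum_eq_zero j (Finset.mem_univ j)
  exact (sub_eq_zero.mp ((mul_eq_zero.mp term_eq_zero).resolve_left hij.ne')).symm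

theorem le_root_of_mulVec_nonpos (hw : ∀ i j, 0 ≤ w i j)
    (hr : ∀ i, Relation.ReflTransGen (fun a b => 0 < w b a) r i)
    (hx : weightedLaplacian w *ᵥ x ≤ 0) (j : V) : x j ≤ x r := by
  have : Nonempty V := ⟨r⟩
  obtain ⟨m, hm⟩ := Finite.exists_max x
  have max_propagates : ∀ i, Relation.ReflTransGen (fun a b => 0 < w b a) r i →
      x i = x m → x r = x m := by
    intro i hri
    induction hri with
    | refl => exact id
    | @tail a b _ hab ih =>
      intro hb
      have hmax : ∀ j, x j ≤ x b := fun j => (hm j).trans_eq hb.symm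
      exact ih ((eq_of_forall_le_of_mulVec_nonpos hw hmax (hx b) hab).trans hb)
  exact (hm j).trans_eq (max_propagates m (hr m) rfl).symm

theorem eq_root_of_mulVec_eq_zero (hw : ∀ i j, 0 ≤ w i j)
    (hr : ∀ i, Relation.ReflTransGen (fun a b => 0 < w b a) r i)
    (hx : weightedLaplacian w *ᵥ x = 0) (j : V) : x j = x r := by
  have neg_mulVec : weightedLaplacian w *ᵥ (-x) = 0 := by rw [mulVec_neg, hx, neg_zero]
  exact (le_root_of_mulVec_nonpos hw hr hx.le j).antisymm
    (neg_le_neg_iff.mp (le_root_of_mulVec_nonpos hw hr neg_mulVec.le j))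

theorem mulVec_ne_one [Nonempty V] (hw : ∀ i j, 0 ≤ w i j) (x : V → R) :
    weightedLaplacian w *ᵥ x ≠ 1 := by
  intro hx
  obtain ⟨i, hi⟩ := Finite.exists_min x
  have nonneg := mulVec_nonneg_of_forall_le (x := -x) hw fun j => neg_le_neg (hi j)
  rw [mulVec_neg, hx, Pi.neg_apply, Pi.one_apply] at nonneg
  exact absurd nonneg (not_le.mpr neg_one_lt_zero)

end MaximumPrinciple

section SimpleZero

variable {K : Type*} [Field K] [LinearOrder K] [IsStrictOrderedRing K] {w : Matrix V V K} {r : V}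

theorem ker_toLin'_eq_span_one (hw : ∀ i j, 0 ≤ w i j)
    (hr : ∀ i, Relation.ReflTransGen (fun a b => 0 < w b a) r i) :
    LinearMap.ker (toLin' (weightedLaplacian w)) = Submodule.span K {1} := by
  refine le_antisymm (fun x hx => ?_) ?_
  · refine Submodule.mem_span_singleton.mpr ⟨x r, funext fun j => ?_⟩
    simpa using (eq_root_of_mulVec_eq_zero hw hr hx j).symm
  · rw [Submodule.span_singleton_le_iff_mem]
    exact mulVec_one w

theorem rootMultiplicity_zero_charpoly (hw : ∀ i j, 0 ≤ w i j)
    (hr : ∀ i, Relation.ReflTransGen (fun a b => 0 < w b a) r i) :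
    (weightedLaplacian w).charpoly.rootMultiplicity 0 = 1 := by
  have : Nonempty V := ⟨r⟩
  have one_notMem_range : (1 : V → K) ∉ LinearMap.range (toLin' (weightedLaplacian w)) :=
    fun ⟨x, hx⟩ => mulVec_ne_one hw x hx
  rw [← charpoly_toLin', rootMultiplicity_zero_charpoly_eq_finrank_ker,
    ker_toLin'_eq_span_one hw hr, finrank_span_singleton one_ne_zero]
  rwa [ker_toLin'_eq_span_one hw hr, Submodule.disjoint_span_singleton' one_ne_zero]

end SimpleZero

theorem re_pos_of_isRoot_charpoly {w : Matrix V V ℝ} (hw : ∀ i j, 0 ≤ w i j) {μ : ℂ}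
    (hμ : ((weightedLaplacian w).map ((↑) : ℝ → ℂ)).charpoly.IsRoot μ) (hμ0 : μ ≠ 0) :
    0 < μ.re := by
  rw [← charpoly_toLin', ← Module.End.hasEigenvalue_iff_isRoot_charpoly] at hμ
  obtain ⟨i, hi⟩ := eigenvalue_mem_ball hμ
  have center_eq : weightedLaplacian w i i = ∑ j ∈ Finset.univ.erase i, w i j := by
    rw [weightedLaplacian, Matrix.sub_apply, diagonal_apply_eq,
      Finset.sum_erase_eq_sub (Finset.mem_univ i)]
  have radius_eq : ∑ j ∈ Finset.univ.erase i, ‖(weightedLaplacian w).map ((↑) : ℝ → ℂ) i j‖ =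
      ∑ j ∈ Finset.univ.erase i, w i j := by
    refine Finset.sum_congr rfl fun j hj => ?_
    rw [map_apply, weightedLaplacian, Matrix.sub_apply,
      diagonal_apply_ne' _ (Finset.ne_of_mem_erase hj), zero_sub, Complex.norm_real, norm_neg,
      Real.norm_of_nonneg (hw i j)]
  rw [radius_eq, map_apply, center_eq] at hi
  exact re_pos_of_mem_closedBall_ofReal_self hi hμ0

end weightedLaplacian

/-- The weight matrix of an unsigned multidigraph: `edgeCount head tail i j` is the number of edges
from `j` to `i`. Edges run from head to tail, so the row index is the tail. -/
def edgeCount {V E : Type*} [DecidableEq V] [Fintype E] (head tail : E → V) : Matrix V V ℝ :=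
  of fun i j => (Finset.univ.filter fun k => tail k = i ∧ head k = j).card

section EdgeCount

variable {V E : Type*} [DecidableEq V] [Fintype E] (head tail : E → V)

theorem edgeCount_nonneg (i j : V) : 0 ≤ edgeCount head tail i j :=
  Nat.cast_nonneg _

theorem edgeCount_pos (k : E) : 0 < edgeCount head tail (tail k) (head k) :=
  Nat.cast_pos.mpr (Finset.card_pos.mpr ⟨k, by simp⟩)

theorem sum_edgeCount [Fintype V] (i : V) :
    ∑ j, edgeCount head tail i j = ∑ k, if tail k = i then 1 else 0 := by
  simp only [edgeCount, of_apply, ← Finset.sum_boole]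
  rw [Finset.sum_comm]
  refine Finset.sum_congr rfl fun k _ => ?_
  split_ifs with hk <;> simp [hk]

end EdgeCount

section SignedLaplacian

variable {N M : ℕ} {head tail : Fin M → Fin N} {σ : Fin M → ℝ} {d : Fin N → ℝ}

theorem Reaches.reflTransGen_edgeCount_pos {a b : Fin N} (h : Reaches head tail a b) :
    Relation.ReflTransGen (fun a b => 0 < edgeCount head tail b a) a b := by
  refine Relation.ReflTransGen.mono ?_ _ _ h
  rintro _ _ ⟨k, rfl, rfl⟩
  exact edgeCount_pos head tail k

theorem Ls_one_eq_weightedLaplacian_edgeCount (hht : ∀ k, head k ≠ tail k) :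
    Ls head tail 1 = weightedLaplacian (edgeCount head tail) := by
  ext i j
  have edge_term (k : Fin M) : Ein head tail 1 i k * (Es head tail 1)ᵀ k j =
      (if tail k = i then if i = j then 1 else 0 else 0) -
        if tail k = i ∧ head k = j then 1 else 0 := by
    have := hht k
    simp only [Ein, Es, of_apply, transpose_apply, Pi.one_apply]
    grind
  have diagonal_term : (∑ k, if tail k = i then if i = j then (1 : ℝ) else 0 else 0) =
      diagonal (fun i => ∑ j, edgeCount head tail i j) i j := by
    rw [diagonal_apply, sum_edgeCount]
    split_ifs <;> simp
  rw [Ls, mul_apply, Finset.sum_congr rfl fun k _ => edge_term k, Finset.sum_sub_distrib,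
    diagonal_term, Finset.sum_boole]
  rfl

theorem Ein_eq_diagonal_mul_Ein_one_mul_diagonal
    (hdσ : ∀ k, d (head k) * d (tail k) = σ k) :
    Ein head tail σ = diagonal d * Ein head tail 1 * diagonal (d ∘ head) := by
  ext i k
  rw [mul_diagonal, diagonal_mul]
  by_cases hi : i = tail k
  · simp [Ein, hi, ← hdσ k, mul_comm]
  · simp [Ein, hi]

theorem Es_eq_diagonal_mul_Es_one_mul_diagonal (hd : ∀ i, d i * d i = 1)
    (hdσ : ∀ k, d (head k) * d (tail k) = σ k) :
    Es head tail σ = diagonal d * Es head tail 1 * diagonal (d ∘ head) := by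
  ext i k
  rw [mul_diagonal, diagonal_mul]
  by_cases hh : i = head k
  · simp [Es, hh, hd]
  · by_cases ht : i = tail k
    · simp [Es, ht, ht ▸ hh, ← hdσ k, mul_comm]
    · simp [Es, hh, ht]

theorem Ls_eq_diagonal_mul_Ls_one_mul_diagonal (hd : ∀ i, d i * d i = 1)
    (hdσ : ∀ k, d (head k) * d (tail k) = σ k) :
    Ls head tail σ = diagonal d * Ls head tail 1 * diagonal d := by
  have diagonal_head_sq : diagonal (d ∘ head) * diagonal (d ∘ head) = 1 := by
    rw [diagonal_mul_diagonal, ← diagonal_one]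
    exact congrArg diagonal (funext fun k => hd (head k))
  calc Ls head tail σ
      = diagonal d * Ein head tail 1 * (diagonal (d ∘ head) * diagonal (d ∘ head)) *
          (Es head tail 1)ᵀ * diagonal d := by
        rw [Ls, Ein_eq_diagonal_mul_Ein_one_mul_diagonal hdσ,
          Es_eq_diagonal_mul_Es_one_mul_diagonal hd hdσ]
        simp only [transpose_mul, diagonal_transpose, Matrix.mul_assoc]
    _ = diagonal d * Ls head tail 1 * diagonal d := by
        rw [diagonal_head_sq, Matrix.mul_one, Ls, Matrix.mul_assoc (diagonal d)]

theorem StructBalanced.charpoly_Ls (hSB : StructBalanced head tail σ)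
    (hht : ∀ k, head k ≠ tail k) :
    (Ls head tail σ).charpoly = (weightedLaplacian (edgeCount head tail)).charpoly := by
  obtain ⟨d, hd, hdσ⟩ := hSB
  have d_sq : ∀ i, d i * d i = 1 := fun i => mul_self_eq_one_iff.mpr (hd i)
  have diagonal_sq : diagonal d * diagonal d = 1 := by
    rw [diagonal_mul_diagonal, funext d_sq, diagonal_one]
  rw [Ls_eq_diagonal_mul_Ls_one_mul_diagonal d_sq hdσ, charpoly_conj_of_mul_self_eq_one diagonal_sq,
    Ls_one_eq_weightedLaplacian_edgeCount hht]

end SignedLaplacian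

theorem simple_zero_eigenvalue_SB_spanning_tree_general {N M : ℕ}
    (head tail : Fin M → Fin N) (σ : Fin M → ℝ)
    (hht : ∀ k, head k ≠ tail k)
    (hSB : StructBalanced head tail σ)
    (htree : HasSpanningTree head tail) :
    Polynomial.rootMultiplicity 0 (((Ls head tail σ).map ((↑) : ℝ → ℂ)).charpoly) = 1 ∧
    ∀ μ : ℂ, (((Ls head tail σ).map ((↑) : ℝ → ℂ)).charpoly).IsRoot μ → μ ≠ 0 → 0 < μ.re := by
  obtain ⟨r, hr⟩ := htree
  have charpoly_eq : ((Ls head tail σ).map ((↑) : ℝ → ℂ)).charpoly =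
      ((weightedLaplacian (edgeCount head tail)).map ((↑) : ℝ → ℂ)).charpoly := by
    change ((Ls head tail σ).map Complex.ofRealHom).charpoly =
      ((weightedLaplacian (edgeCount head tail)).map Complex.ofRealHom).charpoly
    rw [charpoly_map, charpoly_map, hSB.charpoly_Ls hht]
  rw [charpoly_eq]
  refine ⟨?_, fun μ => weightedLaplacian.re_pos_of_isRoot_charpoly (edgeCount_nonneg head tail)⟩
  have real_multiplicity := weightedLaplacian.rootMultiplicity_zero_charpoly
    (edgeCount_nonneg head tail) fun i => (hr i).reflTransGen_edgeCount_pos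
  rw [Polynomial.eq_rootMultiplicity_map Complex.ofRealHom.injective, ← charpoly_map,
    map_zero] at real_multiplicity
  exact real_multiplicity

theorem simple_zero_eigenvalue_SB_spanning_tree {N M : ℕ}
    (head tail : Fin M → Fin N) (σ : Fin M → ℝ)
    (hht : ∀ k, head k ≠ tail k)
    (hinj : ∀ k k', head k = head k' → tail k = tail k' → k = k')
    (hσ : ∀ k, σ k = 1 ∨ σ k = -1)
    (hdss : ∀ k k', head k = tail k' → tail k = head k' → σ k = σ k')
    (hSB : StructBalanced head tail σ)
    (htree : HasSpanningTree head tail) :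
    Polynomial.rootMultiplicity 0 (((Ls head tail σ).map ((↑) : ℝ → ℂ)).charpoly) = 1 ∧
    ∀ μ : ℂ, (((Ls head tail σ).map ((↑) : ℝ → ℂ)).charpoly).IsRoot μ → μ ≠ 0 → 0 < μ.re :=
  simple_zero_eigenvalue_SB_spanning_tree_general head tail σ hht hSB htree
end

section
/- For a structurally balanced signed digraph on N nodes containing a directed spanning tree, the rank of the signed incidence matrix E_s equals N − 1. -/
open Matrix

/-!
Structural balance says that `σ k = d (head k) / d (tail k)` for a nowhere vanishing `d`, and
`x` lies in the left kernel of the incidence matrix iff `x (head k) = σ k * x (tail k)` for every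
edge `k`, that is, iff `x / d` takes equal values at the two ends of every edge. So the left kernel
is a copy of the functions on the set of weakly connected components, and rank-nullity gives the
rank. A directed spanning tree leaves a single component.
-/

section GainGraph

open Function (Coequalizer)

variable {V E : Type*}

/-- The incidence matrix of a digraph whose edges carry gains in a ring: the column of the edge `k`
is `e_{head k} - g k • e_{tail k}`. Unlike in `Es`, the two contributions add up at a loop. -/
def gainIncidence {R : Type*} [Ring R] [DecidableEq V] (head tail : E → V) (g : E → R) :
    Matrix V E R :=
  Matrix.of fun i k => (Pi.single (head k) 1 - Pi.single (tail k) (g k) : V → R) i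

/-- A potential of a gain graph: a nowhere vanishing function on the nodes whose ratio along each
edge is the gain of that edge. A gain graph is balanced iff it has a potential; for gains `± 1` this
is structural balance. -/
structure IsPotential {K : Type*} [Field K] (head tail : E → V) (g : E → K) (p : V → K) :
    Prop where
  ne_zero : ∀ i, p i ≠ 0
  apply_head : ∀ k, p (head k) = g k * p (tail k)

theorem gainIncidence_transpose_mulVec_apply {R : Type*} [Ring R] [DecidableEq V] [Fintype V]
    (head tail : E → V) (g : E → R) (x : V → R) (k : E) :
    ((gainIncidence head tail g)ᵀ *ᵥ x) k = x (head k) - g k * x (tail k) :=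
  calc ((gainIncidence head tail g)ᵀ *ᵥ x) k
      = (Pi.single (head k) 1 - Pi.single (tail k) (g k)) ⬝ᵥ x := rfl
    _ = x (head k) - g k * x (tail k) := by
      rw [sub_dotProduct, single_one_dotProduct, single_dotProduct]

variable {K : Type*} [Field K]

/-- The linear map sending a function `f` on the weakly connected components of a digraph to the
function `i ↦ p i * f [i]` on its nodes. The set of weakly connected components is encoded as the
coequalizer of `head` and `tail`. -/
def componentLift (head tail : E → V) (p : V → K) : (Coequalizer head tail → K) →ₗ[K] (V → K) :=
  LinearMap.mulLeft K p ∘ₗ LinearMap.funLeft K K (Coequalizer.mk head tail)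

theorem componentLift_apply (head tail : E → V) (p : V → K) (f : Coequalizer head tail → K)
    (i : V) : componentLift head tail p f i = p i * f (Coequalizer.mk head tail i) :=
  rfl

theorem componentLift_injective (head tail : E → V) {p : V → K} (hp : ∀ i, p i ≠ 0) :
    Function.Injective (componentLift head tail p) := by
  intro f f' hff'
  funext c
  obtain ⟨i, rfl⟩ := Coequalizer.mk_surjective head tail c
  exact mul_left_cancel₀ (hp i) (congrFun hff' i)

namespace IsPotential

variable {head tail : E → V} {g : E → K} {p : V → K}

theorem div_head_eq_div_tail_iff (hp : IsPotential head tail g p) (x : V → K) (k : E) :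
    x (head k) / p (head k) = x (tail k) / p (tail k) ↔ x (head k) = g k * x (tail k) := by
  rw [div_eq_iff (hp.ne_zero _), hp.apply_head, mul_left_comm, div_mul_cancel₀ _ (hp.ne_zero _)]

theorem mem_range_componentLift_iff (hp : IsPotential head tail g p) (x : V → K) :
    x ∈ LinearMap.range (componentLift head tail p) ↔ ∀ k, x (head k) = g k * x (tail k) := by
  constructor
  · rintro ⟨f, rfl⟩ k
    rw [componentLift_apply, componentLift_apply, Coequalizer.condition, hp.apply_head, mul_assoc]
  · intro hx
    have ratio_comp : (x / p) ∘ head = (x / p) ∘ tail :=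
      funext fun k => (hp.div_head_eq_div_tail_iff x k).2 (hx k)
    exact ⟨Coequalizer.desc head tail (x / p) ratio_comp,
      funext fun i => mul_div_cancel₀ (x i) (hp.ne_zero i)⟩

variable [Fintype V] [DecidableEq V]

theorem ker_gainIncidence_transpose (hp : IsPotential head tail g p) :
    LinearMap.ker (gainIncidence head tail g)ᵀ.mulVecLin =
      LinearMap.range (componentLift head tail p) := by
  ext x
  simp only [LinearMap.mem_ker, mulVecLin_apply, funext_iff, gainIncidence_transpose_mulVec_apply,
    Pi.zero_apply, sub_eq_zero, hp.mem_range_componentLift_iff]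

theorem finrank_ker_gainIncidence_transpose (hp : IsPotential head tail g p) :
    Module.finrank K (LinearMap.ker (gainIncidence head tail g)ᵀ.mulVecLin) =
      Nat.card (Coequalizer head tail) := by
  have : Finite (Coequalizer head tail) := .of_surjective _ (Coequalizer.mk_surjective head tail)
  have := Fintype.ofFinite (Coequalizer head tail)
  rw [hp.ker_gainIncidence_transpose,
    LinearMap.finrank_range_of_inj (componentLift_injective head tail hp.ne_zero),
    Module.finrank_fintype_fun_eq_card, Nat.card_eq_fintype_card]

end IsPotential

theorem rank_incidence_SB_spanning_tree_general [Fintype V] [DecidableEq V] [Fintype E]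
    {head tail : E → V} {g : E → K} {p : V → K} (hp : IsPotential head tail g p) :
    (gainIncidence head tail g).rank + Nat.card (Coequalizer head tail) = Fintype.card V := by
  rw [← rank_transpose, Matrix.rank, ← hp.finrank_ker_gainIncidence_transpose,
    LinearMap.finrank_range_add_finrank_ker, Module.finrank_fintype_fun_eq_card]

end GainGraph

section SignedDigraph

open Function (Coequalizer)

variable {N M : ℕ} {head tail : Fin M → Fin N}

theorem Es_eq_gainIncidence (hht : ∀ k, head k ≠ tail k) (σ : Fin M → ℝ) :
    Es head tail σ = gainIncidence head tail σ := by
  ext i k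
  have tail_ne_head := (hht k).symm
  simp only [Es, gainIncidence, of_apply, Pi.sub_apply, Pi.single_apply]
  split_ifs <;> simp_all

theorem StructBalanced.exists_isPotential {σ : Fin M → ℝ} (hSB : StructBalanced head tail σ) :
    ∃ d, IsPotential head tail σ d := by
  obtain ⟨d, hd, hdσ⟩ := hSB
  have mul_self_d (i : Fin N) : d i * d i = 1 := mul_self_eq_one_iff.2 (hd i)
  exact ⟨d, fun i => left_ne_zero_of_mul_eq_one (mul_self_d i), fun k => by
    rw [← hdσ, mul_assoc, mul_self_d, mul_one]⟩

theorem Reaches.coequalizer_mk_eq {a b : Fin N} (hab : Reaches head tail a b) :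
    Coequalizer.mk head tail a = Coequalizer.mk head tail b := by
  induction hab with
  | refl => rfl
  | tail _ hedge ih =>
    obtain ⟨k, rfl, rfl⟩ := hedge
    exact ih.trans (Coequalizer.condition head tail k)

theorem HasSpanningTree.card_coequalizer (htree : HasSpanningTree head tail) :
    Nat.card (Coequalizer head tail) = 1 := by
  obtain ⟨r, hr⟩ := htree
  refine Nat.card_eq_one_iff_exists.2 ⟨Coequalizer.mk head tail r, fun c => ?_⟩
  obtain ⟨b, rfl⟩ := Coequalizer.mk_surjective head tail c
  exact (hr b).coequalizer_mk_eq.symm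

end SignedDigraph

theorem rank_incidence_SB_spanning_tree {N M : ℕ}
    (head tail : Fin M → Fin N) (σ : Fin M → ℝ)
    (hht : ∀ k, head k ≠ tail k)
    (hinj : ∀ k k', head k = head k' → tail k = tail k' → k = k')
    (hσ : ∀ k, σ k = 1 ∨ σ k = -1)
    (hdss : ∀ k k', head k = tail k' → tail k = head k' → σ k = σ k')
    (hSB : StructBalanced head tail σ)
    (htree : HasSpanningTree head tail) :
    (Es head tail σ).rank = N - 1 := by
  obtain ⟨d, hd⟩ := hSB.exists_isPotential
  simpa only [Es_eq_gainIncidence hht, htree.card_coequalizer, Fintype.card_fin] using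
    Nat.eq_sub_of_add_eq (rank_incidence_SB_spanning_tree_general hd)
end

section
/- For a structurally balanced signed digraph on N nodes containing a directed spanning tree, the rank of the signed Laplacian L_s and the rank of the signed edge Laplacian L_{e_s} are both equal to N − 1. -/
open Matrix

/-!
Switching the signs at the nodes by `d`, a witness of structural balance, turns `L_s` and `L_{e_s}`
into the Laplacians of the unsigned digraph without changing their ranks. The unsigned Laplacian `L`
satisfies a maximum principle: a function attaining its maximum at a node where `L x ≤ 0` takes the
same value at all predecessors of that node. Hence the kernel of `L` consists of the constants when
some node reaches all others, and a constant function in the range of `L` vanishes. So `Eᵀ`,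
`L = E_⊙ Eᵀ` and `L ^ 2 = E_⊙ (Eᵀ E_⊙) Eᵀ` all have the constants as kernel, hence rank `N - 1`,
and the rank of `Eᵀ E_⊙` lies between those of `L ^ 2` and `Eᵀ`.
-/

section Rank

variable {l m n R : Type*} [Fintype m] [Fintype n]

lemma rank_eq_card_sub_one_of_mulVec_eq_zero_iff [Field R] [Nonempty n] {A : Matrix l n R}
    (hA : ∀ x, A *ᵥ x = 0 ↔ ∃ c, x = Function.const n c) :
    A.rank = Fintype.card n - 1 := by
  have hker : A.mulVecLin.ker = R ∙ (1 : n → R) := by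
    ext x
    rw [LinearMap.mem_ker, mulVecLin_apply, hA, Submodule.mem_span_singleton]
    exact exists_congr fun c => by simp [funext_iff, eq_comm]
  have hrank := A.mulVecLin.finrank_range_add_finrank_ker
  rw [hker, finrank_span_singleton one_ne_zero, Module.finrank_pi] at hrank
  exact Nat.eq_sub_of_add_eq hrank

lemma rank_mul_mul_self_le_rank_mul_comm [CommSemiring R] [StrongRankCondition R]
    (A : Matrix n m R) (B : Matrix m n R) : (A * B * (A * B)).rank ≤ (B * A).rank :=
  calc (A * B * (A * B)).rank = (A * (B * A * B)).rank := by simp only [Matrix.mul_assoc]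
    _ ≤ (B * A * B).rank := rank_mul_le_right _ _
    _ ≤ (B * A).rank := rank_mul_le_left _ _

lemma rank_diagonal_mul_mul_diagonal [CommRing R] [IsDomain R] [DecidableEq m] [DecidableEq n]
    {d : m → R} {e : n → R} (hd : ∀ i, d i ≠ 0) (he : ∀ j, e j ≠ 0) (A : Matrix m n R) :
    (diagonal d * A * diagonal e).rank = A.rank := by
  rw [rank_mul_eq_left_of_det_ne_zero _ _ (by simp [Finset.prod_ne_zero_iff, he]),
    rank_mul_eq_right_of_det_ne_zero _ _ (by simp [Finset.prod_ne_zero_iff, hd])]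

end Rank

section InLaplacian

variable {V E K : Type*} [DecidableEq V] [Fintype E] [AddCommGroup K] {head tail : E → V}

/-- The in-degree Laplacian of an unsigned digraph, possibly with parallel edges and loops, applied
to a function `x` on its nodes. It sums over the edges `k` entering `i`, which are those with
`tail k = i` since edges point from `head k` to `tail k`. -/
def inLaplacian (head tail : E → V) (x : V → K) (i : V) : K :=
  ∑ k with tail k = i, (x i - x (head k))

lemma inLaplacian_neg (x : V → K) : inLaplacian head tail (-x) = -inLaplacian head tail x := by
  ext i
  simp only [inLaplacian, Pi.neg_apply, ← Finset.sum_neg_distrib]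
  exact Finset.sum_congr rfl fun k _ => by abel

variable [LinearOrder K] [IsOrderedAddMonoid K] {x : V → K}

lemma inLaplacian_nonneg_of_forall_le {i : V} (hi : ∀ j, x j ≤ x i) :
    0 ≤ inLaplacian head tail x i :=
  Finset.sum_nonneg fun k _ => sub_nonneg.2 (hi (head k))

lemma apply_head_eq_of_inLaplacian_nonpos {k : E} (hmax : ∀ j, x j ≤ x (tail k))
    (hx : inLaplacian head tail x (tail k) ≤ 0) : x (head k) = x (tail k) := by
  have hnonneg : ∀ k' ∈ Finset.univ.filter (tail · = tail k), 0 ≤ x (tail k) - x (head k') :=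
    fun k' _ => sub_nonneg.2 (hmax (head k'))
  have hzero : inLaplacian head tail x (tail k) = 0 :=
    hx.antisymm (inLaplacian_nonneg_of_forall_le hmax)
  have hterm := (Finset.sum_eq_zero_iff_of_nonneg hnonneg).1 hzero k (by simp)
  exact (sub_eq_zero.1 hterm).symm

lemma apply_eq_of_reaches_max {a i : V}
    (hai : Relation.ReflTransGen (fun a b => ∃ k, head k = a ∧ tail k = b) a i)
    (hx : ∀ j, inLaplacian head tail x j ≤ 0) (hi : ∀ j, x j ≤ x i) : x a = x i := by
  induction hai using Relation.ReflTransGen.head_induction_on with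
  | refl => rfl
  | head hab _ ih =>
    obtain ⟨k, rfl, rfl⟩ := hab
    exact (apply_head_eq_of_inLaplacian_nonpos (fun j => (hi j).trans_eq ih.symm) (hx _)).trans ih

lemma le_apply_root_of_inLaplacian_nonpos [Finite V] {r : V}
    (hr : ∀ b, Relation.ReflTransGen (fun a b => ∃ k, head k = a ∧ tail k = b) r b)
    (hx : ∀ i, inLaplacian head tail x i ≤ 0) (j : V) : x j ≤ x r := by
  have : Nonempty V := ⟨r⟩
  obtain ⟨i, hi⟩ := Finite.exists_max x
  exact (hi j).trans_eq (apply_eq_of_reaches_max (hr i) hx hi).symm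

lemma eq_const_of_inLaplacian_eq_zero [Finite V] {r : V}
    (hr : ∀ b, Relation.ReflTransGen (fun a b => ∃ k, head k = a ∧ tail k = b) r b)
    (hx : inLaplacian head tail x = 0) : x = Function.const V (x r) := by
  ext j
  apply le_antisymm
  · exact le_apply_root_of_inLaplacian_nonpos hr (fun i => (congrFun hx i).le) j
  · have hneg : inLaplacian head tail (-x) = 0 := by rw [inLaplacian_neg, hx, neg_zero]
    exact neg_le_neg_iff.1
      (le_apply_root_of_inLaplacian_nonpos hr (fun i => (congrFun hneg i).le) j)

lemma eq_zero_of_inLaplacian_eq_const [Finite V] [Nonempty V] {c : K}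
    (hx : inLaplacian head tail x = Function.const V c) : c = 0 := by
  obtain ⟨i, hi⟩ := Finite.exists_max x
  obtain ⟨j, hj⟩ := Finite.exists_min x
  have hc_nonneg : 0 ≤ c :=
    (inLaplacian_nonneg_of_forall_le hi).trans_eq (congrFun hx i)
  have hneg_c_nonneg : 0 ≤ -c := by
    have h := inLaplacian_nonneg_of_forall_le (head := head) (tail := tail) (x := -x)
      (fun i => neg_le_neg (hj i))
    rwa [inLaplacian_neg, hx] at h
  exact le_antisymm (neg_nonneg.1 hneg_c_nonneg) hc_nonneg

end InLaplacian

section IncidenceMatrix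

variable {N M : ℕ} {head tail : Fin M → Fin N}

lemma Es_transpose_mulVec_apply (hht : ∀ k, head k ≠ tail k) (σ : Fin M → ℝ) (x : Fin N → ℝ)
    (k : Fin M) : ((Es head tail σ)ᵀ *ᵥ x) k = x (head k) - σ k * x (tail k) := by
  have hentry (i : Fin N) : Es head tail σ i k * x i =
      (if i = head k then x i else 0) - (if i = tail k then σ k * x i else 0) := by
    have := hht k
    simp only [Es, of_apply]
    grind
  simp [mulVec, dotProduct, hentry]

lemma Ls_mulVec_eq_zero_of_Es {σ : Fin M → ℝ} {x : Fin N → ℝ}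
    (hx : (Es head tail σ)ᵀ *ᵥ x = 0) : Ls head tail σ *ᵥ x = 0 := by
  rw [Ls, ← mulVec_mulVec, hx, mulVec_zero]

lemma Ls_one_mulVec (hht : ∀ k, head k ≠ tail k) (x : Fin N → ℝ) :
    Ls head tail 1 *ᵥ x = inLaplacian head tail x := by
  ext i
  rw [Ls, ← mulVec_mulVec, inLaplacian, Finset.sum_filter, mulVec, dotProduct]
  refine Fintype.sum_congr _ _ fun k => ?_
  rw [Es_transpose_mulVec_apply hht, Ein, of_apply, Pi.one_apply]
  grind

lemma Es_one_transpose_mulVec_const (hht : ∀ k, head k ≠ tail k) (c : ℝ) :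
    (Es head tail 1)ᵀ *ᵥ Function.const (Fin N) c = 0 := by
  ext k
  simp [Es_transpose_mulVec_apply hht]

lemma Ls_one_mulVec_eq_zero_iff (hht : ∀ k, head k ≠ tail k) (htree : HasSpanningTree head tail)
    (x : Fin N → ℝ) : Ls head tail 1 *ᵥ x = 0 ↔ ∃ c, x = Function.const (Fin N) c := by
  obtain ⟨r, hr⟩ := htree
  constructor
  · intro hx
    rw [Ls_one_mulVec hht] at hx
    exact ⟨x r, eq_const_of_inLaplacian_eq_zero hr hx⟩
  · rintro ⟨c, rfl⟩
    exact Ls_mulVec_eq_zero_of_Es (Es_one_transpose_mulVec_const hht c)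

lemma Es_one_transpose_mulVec_eq_zero_iff (hht : ∀ k, head k ≠ tail k)
    (htree : HasSpanningTree head tail) (x : Fin N → ℝ) :
    (Es head tail 1)ᵀ *ᵥ x = 0 ↔ ∃ c, x = Function.const (Fin N) c := by
  constructor
  · intro hx
    exact (Ls_one_mulVec_eq_zero_iff hht htree x).1 (Ls_mulVec_eq_zero_of_Es hx)
  · rintro ⟨c, rfl⟩
    exact Es_one_transpose_mulVec_const hht c

lemma Ls_one_mul_self_mulVec_eq_zero_iff (hht : ∀ k, head k ≠ tail k)
    (htree : HasSpanningTree head tail) (x : Fin N → ℝ) :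
    (Ls head tail 1 * Ls head tail 1) *ᵥ x = 0 ↔ ∃ c, x = Function.const (Fin N) c := by
  have : Nonempty (Fin N) := htree.nonempty
  rw [← mulVec_mulVec, ← Ls_one_mulVec_eq_zero_iff hht htree x]
  constructor
  · intro hx
    obtain ⟨c, hc⟩ := (Ls_one_mulVec_eq_zero_iff hht htree _).1 hx
    have hc_zero : c = 0 := by
      rw [Ls_one_mulVec hht] at hc
      exact eq_zero_of_inLaplacian_eq_const hc
    rw [hc, hc_zero, Function.const_zero]
  · intro hx
    rw [hx, mulVec_zero]

lemma rank_Ls_one (hht : ∀ k, head k ≠ tail k) (htree : HasSpanningTree head tail) :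
    (Ls head tail 1).rank = N - 1 := by
  have : Nonempty (Fin N) := htree.nonempty
  simpa using rank_eq_card_sub_one_of_mulVec_eq_zero_iff (Ls_one_mulVec_eq_zero_iff hht htree)

lemma rank_Les_one (hht : ∀ k, head k ≠ tail k) (htree : HasSpanningTree head tail) :
    (Les head tail 1).rank = N - 1 := by
  have : Nonempty (Fin N) := htree.nonempty
  have hEs : ((Es head tail 1)ᵀ).rank = N - 1 := by
    simpa using rank_eq_card_sub_one_of_mulVec_eq_zero_iff
      (Es_one_transpose_mulVec_eq_zero_iff hht htree)
  have hLs_sq : (Ls head tail 1 * Ls head tail 1).rank = N - 1 := by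
    simpa using rank_eq_card_sub_one_of_mulVec_eq_zero_iff
      (Ls_one_mul_self_mulVec_eq_zero_iff hht htree)
  apply le_antisymm
  · exact (rank_mul_le_left _ _).trans_eq hEs
  · exact hLs_sq.symm.trans_le (rank_mul_mul_self_le_rank_mul_comm _ _)

end IncidenceMatrix

section Switching

variable {N M : ℕ} {head tail : Fin M → Fin N} {σ : Fin M → ℝ} {d : Fin N → ℝ}

lemma Es_eq_switching (hd : ∀ i, d i * d i = 1) (hσ : ∀ k, d (head k) * d (tail k) = σ k) :
    Es head tail σ = diagonal d * Es head tail 1 * diagonal (d ∘ head) := by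
  ext i k
  rw [mul_diagonal, diagonal_mul]
  simp only [Es, of_apply, Pi.one_apply, Function.comp_apply, ← hσ]
  grind

lemma Ein_eq_switching (hσ : ∀ k, d (head k) * d (tail k) = σ k) :
    Ein head tail σ = diagonal d * Ein head tail 1 * diagonal (d ∘ head) := by
  ext i k
  rw [mul_diagonal, diagonal_mul]
  simp only [Ein, of_apply, Pi.one_apply, Function.comp_apply, ← hσ]
  grind

lemma Ls_eq_switching (hd : ∀ i, d i * d i = 1) (hσ : ∀ k, d (head k) * d (tail k) = σ k) :
    Ls head tail σ = diagonal d * Ls head tail 1 * diagonal d := by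
  have hsq : diagonal (d ∘ head) * diagonal (d ∘ head) = 1 := by simp [diagonal_mul_diagonal, hd]
  calc Ls head tail σ
      = diagonal d * Ein head tail 1 * (diagonal (d ∘ head) * diagonal (d ∘ head)) *
          (Es head tail 1)ᵀ * diagonal d := by
        rw [Ls, Ein_eq_switching hσ, Es_eq_switching hd hσ]
        simp only [transpose_mul, diagonal_transpose, Matrix.mul_assoc]
    _ = diagonal d * Ls head tail 1 * diagonal d := by
        rw [hsq, Matrix.mul_one, Ls, Matrix.mul_assoc (diagonal d)]

lemma Les_eq_switching (hd : ∀ i, d i * d i = 1) (hσ : ∀ k, d (head k) * d (tail k) = σ k) :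
    Les head tail σ = diagonal (d ∘ head) * Les head tail 1 * diagonal (d ∘ head) := by
  have hsq : diagonal d * diagonal d = 1 := by simp [diagonal_mul_diagonal, hd]
  calc Les head tail σ
      = diagonal (d ∘ head) * (Es head tail 1)ᵀ * (diagonal d * diagonal d) *
          Ein head tail 1 * diagonal (d ∘ head) := by
        rw [Les, Ein_eq_switching hσ, Es_eq_switching hd hσ]
        simp only [transpose_mul, diagonal_transpose, Matrix.mul_assoc]
    _ = diagonal (d ∘ head) * Les head tail 1 * diagonal (d ∘ head) := by
        rw [hsq, Matrix.mul_one, Les, Matrix.mul_assoc (diagonal (d ∘ head))]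

end Switching

theorem rank_laplacians_SB_spanning_tree_general {N M : ℕ}
    (head tail : Fin M → Fin N) (σ : Fin M → ℝ)
    (hht : ∀ k, head k ≠ tail k)
    (hSB : StructBalanced head tail σ)
    (htree : HasSpanningTree head tail) :
    (Ls head tail σ).rank = N - 1 ∧ (Les head tail σ).rank = N - 1 := by
  obtain ⟨d, hd, hσ⟩ := hSB
  have hd_sq (i : Fin N) : d i * d i = 1 := mul_self_eq_one_iff.2 (hd i)
  have hd_ne (i : Fin N) : d i ≠ 0 := left_ne_zero_of_mul_eq_one (hd_sq i)
  constructor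
  · rw [Ls_eq_switching hd_sq hσ, rank_diagonal_mul_mul_diagonal hd_ne hd_ne]
    exact rank_Ls_one hht htree
  · have hd_head_ne (k : Fin M) : (d ∘ head) k ≠ 0 := hd_ne (head k)
    rw [Les_eq_switching hd_sq hσ, rank_diagonal_mul_mul_diagonal hd_head_ne hd_head_ne]
    exact rank_Les_one hht htree

theorem rank_laplacians_SB_spanning_tree {N M : ℕ}
    (head tail : Fin M → Fin N) (σ : Fin M → ℝ)
    (hht : ∀ k, head k ≠ tail k)
    (hinj : ∀ k k', head k = head k' → tail k = tail k' → k = k')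
    (hσ : ∀ k, σ k = 1 ∨ σ k = -1)
    (hdss : ∀ k k', head k = tail k' → tail k = head k' → σ k = σ k')
    (hSB : StructBalanced head tail σ)
    (htree : HasSpanningTree head tail) :
    (Ls head tail σ).rank = N - 1 ∧ (Les head tail σ).rank = N - 1 :=
  rank_laplacians_SB_spanning_tree_general head tail σ hht hSB htree
end

section
/- Let a signed digraph contain a directed spanning tree, and write ker for kernels of matrices acting on ℝ^M. (a) If the digraph is structurally balanced, then ker(L_{e_s}ᵀ) = ker(E_s). (b) If the digraph is structurally unbalanced and contains no root node, then ker(L_{e_s}ᵀ) = ker(E_s). (c) If the digraph is structurally unbalanced and contains a root node, then ker(L_{e_s}ᵀ) ≠ ker(E_s). -/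
open Matrix

/-!
The matrix `L_{e_s}ᵀ = E_{s⊙}ᵀ E_s` annihilates `v` exactly when `E_s v` vanishes at every tail of
an edge, so the two kernels differ only through vectors `E_s v` supported on root nodes, and a
spanning tree leaves room for at most one root node. Balance means that some nowhere vanishing `x`
satisfies `x E_s = 0`, since such an `x` may be replaced by its sign vector. Pairing `E_s v` with it
kills the entry of `E_s v` at the root node. Any solution of `x E_s = 0` vanishes nowhere or
everywhere, because its zeros propagate along the spanning tree. In the unbalanced case this forces
`x = 0`, so the rows of `E_s` are independent and the indicator of a root node is some `E_s v`.
-/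

theorem mulVec_surjective_of_vecMul_injective {K m n : Type*} [Field K] [Fintype m] [Fintype n]
    {A : Matrix m n K} (hA : Function.Injective A.vecMul) : Function.Surjective A.mulVec := by
  have hrank : A.rank = Fintype.card m := (vecMul_injective_iff.1 hA).rank_matrix
  have hrange : LinearMap.range A.mulVecLin = ⊤ :=
    Submodule.eq_top_of_finrank_eq <| by
      rw [← Matrix.rank, hrank, Module.finrank_fintype_fun_eq_card]
  exact LinearMap.range_eq_top.1 hrange

theorem eq_zero_of_dotProduct_eq_zero_of_forall_ne {R n : Type*} [NonUnitalNonAssocSemiring R]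
    [NoZeroDivisors R] [Fintype n] {x w : n → R} {i : n} (hxi : x i ≠ 0) (hw : ∀ j ≠ i, w j = 0)
    (hxw : x ⬝ᵥ w = 0) : w = 0 := by
  have hdot : x ⬝ᵥ w = x i * w i :=
    Fintype.sum_eq_single i fun j hj => by rw [hw j hj, mul_zero]
  have hwi : w i = 0 := (mul_eq_zero.1 (hdot ▸ hxw)).resolve_left hxi
  funext j
  by_cases hj : j = i
  · rw [hj, hwi, Pi.zero_apply]
  · exact hw j hj

theorem ne_zero_of_eq_one_or_eq_neg_one {R : Type*} [NonAssocRing R] [Nontrivial R] {a : R}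
    (ha : a = 1 ∨ a = -1) : a ≠ 0 := by
  rcases ha with rfl | rfl
  · exact one_ne_zero
  · exact neg_ne_zero.2 one_ne_zero

section SignedDigraph

variable {N M : ℕ} {head tail : Fin M → Fin N} {σ : Fin M → ℝ}

theorem vecMul_Es_apply {k : Fin M} (hht : head k ≠ tail k) (x : Fin N → ℝ) :
    (x ᵥ* Es head tail σ) k = x (head k) - σ k * x (tail k) := by
  have hcol : (Es head tail σ).col k = Pi.single (head k) 1 - Pi.single (tail k) (σ k) := by
    funext i
    by_cases hi : i = head k
    · simp [Es, hi, hht]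
    · simp [Es, hi, Pi.single_apply, neg_ite]
  calc (x ᵥ* Es head tail σ) k
      = x ⬝ᵥ (Es head tail σ).col k := rfl
    _ = x (head k) - σ k * x (tail k) := by
      rw [hcol, dotProduct_sub, dotProduct_single, dotProduct_single, mul_one, mul_comm (σ k)]

theorem vecMul_Es_eq_zero_iff (hht : ∀ k, head k ≠ tail k) {x : Fin N → ℝ} :
    x ᵥ* Es head tail σ = 0 ↔ ∀ k, x (head k) = σ k * x (tail k) := by
  simp only [funext_iff, vecMul_Es_apply (hht _), Pi.zero_apply, sub_eq_zero]

theorem transpose_Les_mulVec_apply (v : Fin M → ℝ) (k : Fin M) :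
    ((Les head tail σ)ᵀ *ᵥ v) k = -σ k * (Es head tail σ *ᵥ v) (tail k) := by
  rw [Les, transpose_mul, transpose_transpose, ← mulVec_mulVec]
  simp [mulVec, dotProduct, Ein]

theorem transpose_Les_mulVec_eq_zero_iff (hσ : ∀ k, σ k ≠ 0) {v : Fin M → ℝ} :
    (Les head tail σ)ᵀ *ᵥ v = 0 ↔ ∀ k, (Es head tail σ *ᵥ v) (tail k) = 0 := by
  simp only [funext_iff, transpose_Les_mulVec_apply, Pi.zero_apply, mul_eq_zero, neg_eq_zero, hσ,
    false_or]

theorem ker_transpose_Les_eq_ker_Es_iff (hσ : ∀ k, σ k ≠ 0) :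
    {v | (Les head tail σ)ᵀ *ᵥ v = 0} = {v | Es head tail σ *ᵥ v = 0} ↔
      ∀ v, (∀ k, (Es head tail σ *ᵥ v) (tail k) = 0) → Es head tail σ *ᵥ v = 0 := by
  simp only [Set.ext_iff, Set.mem_ofPred_eq, transpose_Les_mulVec_eq_zero_iff hσ]
  exact forall_congr' fun v => ⟨Iff.mp, fun h => ⟨h, fun hv k => congrFun hv (tail k)⟩⟩

theorem not_isRootNode_iff {i : Fin N} : ¬ IsRootNode tail i ↔ ∃ k, tail k = i := by
  simp only [IsRootNode, not_forall, not_not]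

theorem Reaches.eq_of_isRootNode {a b : Fin N} (hab : Reaches head tail a b)
    (hb : IsRootNode tail b) : b = a := by
  rcases Relation.ReflTransGen.cases_tail hab with hba | ⟨_, _, k, _, hk⟩
  · exact hba
  · exact absurd hk (hb k)

theorem Reaches.eq_zero_iff {a b : Fin N} (hab : Reaches head tail a b) (hσ : ∀ k, σ k ≠ 0)
    {x : Fin N → ℝ} (hx : ∀ k, x (head k) = σ k * x (tail k)) : x a = 0 ↔ x b = 0 := by
  induction hab with
  | refl => rfl
  | tail _ hedge ih =>
    obtain ⟨k, rfl, rfl⟩ := hedge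
    rw [ih, hx k, mul_eq_zero_iff_left (hσ k)]

theorem HasSpanningTree.ne_zero_of_vecMul_Es_eq_zero (htree : HasSpanningTree head tail)
    (hht : ∀ k, head k ≠ tail k) (hσ : ∀ k, σ k ≠ 0) {x : Fin N → ℝ}
    (hx : x ᵥ* Es head tail σ = 0) (hx0 : x ≠ 0) (i : Fin N) : x i ≠ 0 := by
  obtain ⟨r, hr⟩ := htree
  have hzero : ∀ b, x r = 0 ↔ x b = 0 := fun b =>
    (hr b).eq_zero_iff hσ ((vecMul_Es_eq_zero_iff hht).1 hx)
  exact fun hi => hx0 (funext fun b => (hzero b).1 ((hzero i).2 hi))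

theorem StructBalanced.exists_vecMul_Es_eq_zero (hbal : StructBalanced head tail σ)
    (hht : ∀ k, head k ≠ tail k) :
    ∃ x : Fin N → ℝ, (∀ i, x i ≠ 0) ∧ x ᵥ* Es head tail σ = 0 := by
  obtain ⟨d, hd, hdσ⟩ := hbal
  refine ⟨d, fun i => ne_zero_of_eq_one_or_eq_neg_one (hd i),
    (vecMul_Es_eq_zero_iff hht).2 fun k => ?_⟩
  rw [← hdσ k, mul_assoc, mul_self_eq_one_iff.2 (hd (tail k)), mul_one]

theorem structBalanced_of_vecMul_Es_eq_zero (hht : ∀ k, head k ≠ tail k)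
    (hσ : ∀ k, σ k = 1 ∨ σ k = -1) {x : Fin N → ℝ} (hx0 : ∀ i, x i ≠ 0)
    (hx : x ᵥ* Es head tail σ = 0) : StructBalanced head tail σ := by
  let d : Fin N → ℝ := fun i => SignType.sign (x i)
  have hd : ∀ i, d i = 1 ∨ d i = -1 := fun i => by
    rcases lt_or_gt_of_ne (hx0 i) with hi | hi <;> simp [d, hi]
  have hsignσ : ∀ k, (SignType.sign (σ k) : ℝ) = σ k := fun k => by
    rcases hσ k with hk | hk <;> simp [hk]
  have hdhead : ∀ k, d (head k) = σ k * d (tail k) := fun k => by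
    simp only [d, (vecMul_Es_eq_zero_iff hht).1 hx k, sign_mul, SignType.coe_mul, hsignσ]
  refine ⟨d, hd, fun k => ?_⟩
  rw [hdhead, mul_assoc, mul_self_eq_one_iff.2 (hd (tail k)), mul_one]

theorem mulVec_Es_surjective (hht : ∀ k, head k ≠ tail k) (hσ : ∀ k, σ k = 1 ∨ σ k = -1)
    (htree : HasSpanningTree head tail) (hbal : ¬ StructBalanced head tail σ) :
    Function.Surjective (Es head tail σ).mulVec := by
  have hσ0 : ∀ k, σ k ≠ 0 := fun k => ne_zero_of_eq_one_or_eq_neg_one (hσ k)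
  refine mulVec_surjective_of_vecMul_injective
    ((injective_iff_map_eq_zero (Es head tail σ).vecMulLinear).2 fun x hx => ?_)
  by_contra hx0
  have hxi : ∀ i, x i ≠ 0 := htree.ne_zero_of_vecMul_Es_eq_zero hht hσ0 hx hx0
  exact hbal (structBalanced_of_vecMul_Es_eq_zero hht hσ hxi hx)

theorem StructBalanced.mulVec_Es_eq_zero (hbal : StructBalanced head tail σ)
    (hht : ∀ k, head k ≠ tail k) (htree : HasSpanningTree head tail) {v : Fin M → ℝ}
    (hv : ∀ k, (Es head tail σ *ᵥ v) (tail k) = 0) : Es head tail σ *ᵥ v = 0 := by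
  obtain ⟨x, hx0, hx⟩ := hbal.exists_vecMul_Es_eq_zero hht
  obtain ⟨r, hr⟩ := htree
  refine eq_zero_of_dotProduct_eq_zero_of_forall_ne (hx0 r) (fun b hb => ?_) ?_
  · have hroot : ¬ IsRootNode tail b := fun h => hb ((hr b).eq_of_isRootNode h)
    obtain ⟨k, rfl⟩ := not_isRootNode_iff.1 hroot
    exact hv k
  · rw [dotProduct_mulVec, hx, zero_dotProduct]

theorem kernel_edge_laplacian_vs_incidence_general (hht : ∀ k, head k ≠ tail k)
    (hσ : ∀ k, σ k = 1 ∨ σ k = -1) (htree : HasSpanningTree head tail) :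
    {v : Fin M → ℝ | (Les head tail σ)ᵀ *ᵥ v = 0} = {v : Fin M → ℝ | Es head tail σ *ᵥ v = 0} ↔
      StructBalanced head tail σ ∨ ¬ ∃ i, IsRootNode tail i := by
  have hσ0 : ∀ k, σ k ≠ 0 := fun k => ne_zero_of_eq_one_or_eq_neg_one (hσ k)
  rw [ker_transpose_Les_eq_ker_Es_iff hσ0]
  constructor
  · intro hker
    by_contra! ⟨hbal, i, hi⟩
    obtain ⟨v, hv⟩ := mulVec_Es_surjective hht hσ htree hbal (Pi.single i 1)
    have hv0 := hker v fun k => by rw [hv, Pi.single_eq_of_ne (hi k)]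
    exact one_ne_zero (Pi.single_eq_zero_iff.1 (hv.symm.trans hv0))
  · rintro (hbal | hroot) v hv
    · exact hbal.mulVec_Es_eq_zero hht htree hv
    · have htail : Function.Surjective tail := fun i =>
        not_isRootNode_iff.1 fun hi => hroot ⟨i, hi⟩
      exact funext (htail.forall.2 hv)

end SignedDigraph

theorem kernel_edge_laplacian_vs_incidence {N M : ℕ}
    (head tail : Fin M → Fin N) (σ : Fin M → ℝ)
    (hht : ∀ k, head k ≠ tail k)
    (hinj : ∀ k k', head k = head k' → tail k = tail k' → k = k')
    (hσ : ∀ k, σ k = 1 ∨ σ k = -1)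
    (hdss : ∀ k k', head k = tail k' → tail k = head k' → σ k = σ k')
    (htree : HasSpanningTree head tail) :
    (StructBalanced head tail σ →
      {v : Fin M → ℝ | (Les head tail σ)ᵀ.mulVec v = 0} =
        {v : Fin M → ℝ | (Es head tail σ).mulVec v = 0}) ∧
    (¬ StructBalanced head tail σ → (¬ ∃ i, IsRootNode tail i) →
      {v : Fin M → ℝ | (Les head tail σ)ᵀ.mulVec v = 0} =
        {v : Fin M → ℝ | (Es head tail σ).mulVec v = 0}) ∧
    (¬ StructBalanced head tail σ → (∃ i, IsRootNode tail i) →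
      {v : Fin M → ℝ | (Les head tail σ)ᵀ.mulVec v = 0} ≠
        {v : Fin M → ℝ | (Es head tail σ).mulVec v = 0}) := by
  have hker := kernel_edge_laplacian_vs_incidence_general hht hσ htree
  exact ⟨fun hbal => hker.2 (.inl hbal), fun _ hroot => hker.2 (.inr hroot),
    fun hbal hroot heq => (hker.1 heq).elim hbal (not_not_intro hroot)⟩
end

section
/- Let a signed digraph on N nodes be a directed spanning tree: M = N − 1, there is a node r from which every node is reachable, r is the tail of no edge, and every node other than r is the tail of exactly one edge. Then every complex eigenvalue of the signed edge Laplacian L_{e_s} ∈ ℝ^{(N−1)×(N−1)} has positive real part (in particular L_{e_s} has no zero eigenvalue), and for every symmetric positive definite Q ∈ ℝ^{(N−1)×(N−1)} there exists a symmetric positive definite P ∈ ℝ^{(N−1)×(N−1)} such that P·L_{e_s} + L_{e_s}ᵀ·P = Q. -/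
open Matrix

/-!
In a directed spanning tree every edge `k` has at most one parent edge, the one pointing into
`head k`, so apart from its diagonal of ones `Les` only has entries at (edge, parent edge) pairs.
Passing to parents terminates at the root; hence `Les - 1` is nilpotent and the only eigenvalue of
`Les` is `1`.

For the Lyapunov equation of a unipotent `A`, the Cayley transform `C = (A - 1) (A + 1)⁻¹` is
nilpotent and turns `P A + Aᴴ P = Q` into the Stein equation `P - Cᴴ P C = R` with `R` positive
definite, which is solved by the finite sum `P = ∑ j, (Cʲ)ᴴ R Cʲ`.
-/

section Nilpotent

variable {n R : Type*} [Fintype n] [DecidableEq n]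

theorem isNilpotent_of_wellFounded [Semiring R] {T : Matrix n n R} {S : n → n → Prop}
    (hS : WellFounded S) (hT : ∀ k l, T k l ≠ 0 → S l k) : IsNilpotent T := by
  have row_eventually_zero (k : n) : ∀ᶠ m in Filter.atTop, (T ^ m) k = 0 := by
    induction k using hS.induction with
    | _ k ih =>
      have rows_below : ∀ᶠ m in Filter.atTop, ∀ l, S l k → (T ^ m) l = 0 :=
        Filter.eventually_all.2 fun l => Filter.eventually_imp_distrib_left.2 (ih l)
      rw [← Filter.map_add_atTop_eq_nat 1, Filter.eventually_map]
      filter_upwards [rows_below] with m hm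
      ext j
      rw [pow_succ', mul_apply]
      refine Finset.sum_eq_zero fun l _ => ?_
      by_cases hkl : T k l = 0
      · rw [hkl, zero_mul]
      · rw [hm l (hT k l hkl), Pi.zero_apply, mul_zero]
  obtain ⟨m, hm⟩ := (Filter.eventually_all.2 row_eventually_zero).exists
  exact ⟨m, funext hm⟩

theorem eq_one_of_isRoot_charpoly_of_isNilpotent_sub_one [CommRing R] [IsDomain R]
    {A : Matrix n n R} (hA : IsNilpotent (A - 1)) {μ : R} (hμ : A.charpoly.IsRoot μ) : μ = 1 := by
  have charpoly_eq : (A - 1).charpoly = Polynomial.X ^ Fintype.card n :=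
    sub_eq_zero.1 (isNilpotent_charpoly_sub_pow_of_isNilpotent hA).eq_zero
  have pow_eq_zero : (μ - 1) ^ Fintype.card n = 0 := by
    calc (μ - 1) ^ Fintype.card n = (A - scalar n 1).charpoly.eval (μ - 1) := by
          rw [map_one, charpoly_eq, Polynomial.eval_pow, Polynomial.eval_X]
      _ = A.charpoly.eval μ := by
          rw [charpoly_sub_scalar, Polynomial.eval_comp, Polynomial.eval_add, Polynomial.eval_X,
            Polynomial.eval_C, sub_add_cancel]
      _ = 0 := hμ
  exact sub_eq_zero.1 (eq_zero_of_pow_eq_zero pow_eq_zero)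

end Nilpotent

section Lyapunov

variable {n R : Type*} [Fintype n] [DecidableEq n]

theorem isUnit_two_matrix [Semiring R] (h2 : IsUnit (2 : R)) : IsUnit (2 : Matrix n n R) := by
  simpa only [map_ofNat] using h2.map (scalar n)

variable [Ring R] [StarRing R]

theorem cayley_sub_eq_two_mul_lyapunov (A P : Matrix n n R) :
    (A + 1)ᴴ * P * (A + 1) - (A - 1)ᴴ * P * (A - 1) = 2 * (P * A + Aᴴ * P) := by
  rw [conjTranspose_add, conjTranspose_sub, conjTranspose_one]
  noncomm_ring

theorem lyapunov_of_stein_cayley (h2 : IsUnit (2 : R)) {A V P Q : Matrix n n R}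
    (hV : V * (A + 1) = 1)
    (stein : P - ((A - 1) * V)ᴴ * P * ((A - 1) * V) = Vᴴ * (2 * Q) * V) :
    P * A + Aᴴ * P = Q := by
  refine (isUnit_two_matrix h2).mul_left_cancel ?_
  have cayley_mul : (A - 1) * V * (A + 1) = A - 1 := by rw [mul_assoc, hV, mul_one]
  generalize (A - 1) * V = C at stein cayley_mul
  calc 2 * (P * A + Aᴴ * P)
      = (A + 1)ᴴ * P * (A + 1) - (C * (A + 1))ᴴ * P * (C * (A + 1)) := by
        rw [cayley_mul, cayley_sub_eq_two_mul_lyapunov]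
    _ = (A + 1)ᴴ * (P - Cᴴ * P * C) * (A + 1) := by
        simp only [conjTranspose_mul, mul_sub, sub_mul, mul_assoc]
    _ = (V * (A + 1))ᴴ * (2 * Q) * (V * (A + 1)) := by
        rw [stein]
        simp only [conjTranspose_mul, mul_assoc]
    _ = 2 * Q := by rw [hV, conjTranspose_one, one_mul, mul_one]

variable [PartialOrder R] [AddLeftMono R]

theorem exists_posDef_stein_of_isNilpotent {C Q : Matrix n n R} (hC : IsNilpotent C)
    (hQ : Q.PosDef) : ∃ P : Matrix n n R, P.PosDef ∧ P - Cᴴ * P * C = Q := by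
  obtain ⟨m, hm⟩ := hC
  let summand (j : ℕ) : Matrix n n R := (C ^ j)ᴴ * Q * C ^ j
  have summand_zero : summand 0 = Q := by simp [summand]
  have summand_succ (j : ℕ) : Cᴴ * summand j * C = summand (j + 1) := by
    simp only [summand, pow_succ, conjTranspose_mul, mul_assoc]
  have summand_last : summand (m + 1) = 0 := by simp [summand, pow_succ, hm]
  refine ⟨∑ j ∈ Finset.range (m + 1), summand j, ?_, ?_⟩
  · rw [Finset.sum_range_succ', summand_zero]
    exact PosDef.posSemidef_add
      (posSemidef_sum _ fun j _ => hQ.posSemidef.conjTranspose_mul_mul_same _) hQ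
  · simp only [Finset.mul_sum, Finset.sum_mul, summand_succ]
    rw [← Finset.sum_sub_distrib, Finset.sum_range_sub', summand_zero, summand_last, sub_zero]

theorem exists_posDef_lyapunov_of_isNilpotent_sub_one (h2 : IsUnit (2 : R)) {A Q : Matrix n n R}
    (hA : IsNilpotent (A - 1)) (hQ : Q.PosDef) :
    ∃ P : Matrix n n R, P.PosDef ∧ P * A + Aᴴ * P = Q := by
  obtain ⟨U, hU⟩ : IsUnit (A + 1) := by
    rw [show A + 1 = 2 + (A - 1) by rw [← one_add_one_eq_two]; abel]
    exact hA.isUnit_add_left_of_commute (isUnit_two_matrix h2) (Commute.ofNat_right _ 2)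
  have commute_inv : Commute (A - 1) ↑U⁻¹ := by
    refine Commute.units_inv_right ?_
    rw [hU]
    exact ((Commute.refl A).add_right (.one_right A)).sub_left (.one_left _)
  have posDef_rhs : ((↑U⁻¹ : Matrix n n R)ᴴ * (2 * Q) * (↑U⁻¹ : Matrix n n R)).PosDef := by
    rw [two_mul]
    exact (IsUnit.posDef_star_left_conjugate_iff U⁻¹.isUnit).2 (hQ.add hQ)
  obtain ⟨P, hP, stein⟩ :=
    exists_posDef_stein_of_isNilpotent (commute_inv.isNilpotent_mul_right hA) posDef_rhs
  exact ⟨P, hP, lyapunov_of_stein_cayley h2 (by rw [← hU, Units.inv_mul]) stein⟩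

end Lyapunov

section SpanningTree

variable {N M : ℕ} {head tail : Fin M → Fin N} {σ : Fin M → ℝ}

/-- Edge `l` is a parent of edge `k` if `l` ends where `k` starts; an edge runs from its `head` to
its `tail`. Off the diagonal, `Les` is supported on the pairs `(k, l)` related in this way. -/
def IsParentEdge (head tail : Fin M → Fin N) (l k : Fin M) : Prop :=
  tail l = head k

theorem wellFounded_isParentEdge (htail : Function.Injective tail) {r : Fin N}
    (hr : ∀ b, Reaches head tail r b) (hroot : IsRootNode tail r) :
    WellFounded (IsParentEdge head tail) := by
  have acc_of_reaches {b : Fin N} (hb : Reaches head tail r b) :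
      ∀ k, tail k = b → Acc (IsParentEdge head tail) k := by
    induction hb with
    | refl => exact fun k hk => absurd hk (hroot k)
    | tail _ hbc ih =>
      obtain ⟨e, he, rfl⟩ := hbc
      intro k hk
      obtain rfl := htail hk
      exact Acc.intro _ fun l hl => ih l (hl.trans he)
  exact ⟨fun k => acc_of_reaches (hr _) k rfl⟩

theorem Les_apply (k l : Fin M) :
    Les head tail σ k l = Es head tail σ (tail l) k * -σ l := by
  simp [Les, Ein, mul_apply]

theorem Les_sub_one_apply_eq_zero (htail : Function.Injective tail)
    (hσ : ∀ k, σ k = 1 ∨ σ k = -1) {k l : Fin M} (hlk : ¬ IsParentEdge head tail l k) :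
    (Les head tail σ - 1) k l = 0 := by
  have tail_ne_head : tail l ≠ head k := hlk
  rw [Matrix.sub_apply, Les_apply]
  obtain rfl | hkl := eq_or_ne k l
  · have sq_sign : σ k * σ k = 1 := mul_self_eq_one_iff.2 (hσ k)
    simp [Es, tail_ne_head, sq_sign]
  · simp [Es, tail_ne_head, htail.ne hkl.symm, hkl]

theorem isNilpotent_Les_sub_one (htail : Function.Injective tail)
    (hσ : ∀ k, σ k = 1 ∨ σ k = -1) {r : Fin N} (hr : ∀ b, Reaches head tail r b)
    (hroot : IsRootNode tail r) : IsNilpotent (Les head tail σ - 1) :=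
  isNilpotent_of_wellFounded (wellFounded_isParentEdge htail hr hroot) fun _ _ =>
    not_imp_comm.1 (Les_sub_one_apply_eq_zero htail hσ)

end SpanningTree

theorem lyapunov_spanning_tree {N M : ℕ}
    (head tail : Fin M → Fin N) (σ : Fin M → ℝ)
    (hht : ∀ k, head k ≠ tail k)
    (hinj : ∀ k k', head k = head k' → tail k = tail k' → k = k')
    (hσ : ∀ k, σ k = 1 ∨ σ k = -1)
    (hdss : ∀ k k', head k = tail k' → tail k = head k' → σ k = σ k')
    (hM : M + 1 = N)
    (r : Fin N) (hr : ∀ b, Reaches head tail r b)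
    (hroot : ∀ k, tail k ≠ r)
    (huniq : ∀ i, i ≠ r → ∃! k, tail k = i) :
    (∀ μ : ℂ, (((Les head tail σ).map ((↑) : ℝ → ℂ)).charpoly).IsRoot μ → 0 < μ.re) ∧
    ∀ Q : Matrix (Fin M) (Fin M) ℝ, Q.PosDef →
      ∃ P : Matrix (Fin M) (Fin M) ℝ, P.PosDef ∧
        P * Les head tail σ + (Les head tail σ)ᵀ * P = Q := by
  have htail : Function.Injective tail := fun _ l h => (huniq (tail l) (hroot l)).unique h rfl
  have hnil : IsNilpotent (Les head tail σ - 1) := isNilpotent_Les_sub_one htail hσ hr hroot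
  refine ⟨fun μ hμ => ?_, fun Q hQ => ?_⟩
  · have hnilℂ : IsNilpotent ((Les head tail σ).map ((↑) : ℝ → ℂ) - 1) := by
      have := hnil.map Complex.ofRealHom.mapMatrix
      rwa [map_sub, map_one] at this
    rw [eq_one_of_isRoot_charpoly_of_isNilpotent_sub_one hnilℂ hμ]
    exact zero_lt_one
  · rw [← conjTranspose_eq_transpose_of_trivial]
    exact exists_posDef_lyapunov_of_isNilpotent_sub_one two_ne_zero.isUnit hnil hQ
end
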